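/- Let g : ℝ² → ℝ be smooth with compact support. Define Φ(x) = (2π)⁻¹ ∫_{ℝ²} log‖x − y‖ g(y) dy. Then for every x the integrand is Lebesgue integrable, Φ is twice continuously differentiable on ℝ², and ΔΦ(x) = g(x) for all x ∈ ℝ², where ΔΦ denotes the sum of the second partial derivatives of Φ. -/

import Mathlib

open MeasureTheory

/-!
Write `K z = log |z|`, so that `Φ = (2π)⁻¹ (K ⋆ g)`. The kernel `K` is locally integrable
(`locallyIntegrable_logKernel`), hence the convolution with a smooth compactly supported `g` exists,
is smooth, and its derivatives fall on `g` (`dirDeriv_logConv`). Since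
`Δg (p - t) = Δ_t (g (p - t))`, the claim reduces to `∫ K Δh = 2π h(0)` for smooth compactly
supported `h` (`integral_logKernel_laplacian`).

In polar coordinates, with `u (r, θ) = h (r cos θ, r sin θ)`, one has
`r Δh = ∂_r (r ∂_r u) + ∂_θ (r⁻¹ ∂_θ u)`, and both summands extend continuously to `r = 0`, so that
after multiplication by `log r` each is integrable separately. The angular part integrates to zero
over a period for each `r`. The radial part has for each `θ` the primitive
`log r · r ∂_r u - u` of `log r · ∂_r (r ∂_r u)`, which is `-h(0)` at `r = 0` and vanishes for large
`r`; hence it contributes `h(0)` for every `θ`. No ball needs to be excised.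
-/

namespace LogPotential

/-- The kernel `log |z|` on the plane, with `|z|` the Euclidean norm (the norm of `ℝ × ℝ` in Mathlib
is the sup norm). -/
noncomputable def logKernel (z : ℝ × ℝ) : ℝ := Real.log (Real.sqrt (z.1 ^ 2 + z.2 ^ 2))

/-- The directional derivative of `f` along `v`, as a function of the point. -/
noncomputable def dirDeriv (v : ℝ × ℝ) (f : ℝ × ℝ → ℝ) (q : ℝ × ℝ) : ℝ := fderiv ℝ f q v

/-- The convolution of the logarithmic kernel with `h`. -/
noncomputable def logConv (h : ℝ × ℝ → ℝ) : ℝ × ℝ → ℝ :=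
  convolution logKernel h (ContinuousLinearMap.mul ℝ ℝ) volume

/-! ### Directional derivatives -/

lemma contDiff_dirDeriv {f : ℝ × ℝ → ℝ} (hf : ContDiff ℝ (⊤ : ℕ∞) f) (v : ℝ × ℝ) :
    ContDiff ℝ (⊤ : ℕ∞) (dirDeriv v f) :=
  (hf.fderiv_right (m := (⊤ : ℕ∞)) (by norm_cast)).clm_apply contDiff_const

lemma hasCompactSupport_dirDeriv {f : ℝ × ℝ → ℝ} (hf : HasCompactSupport f) (v : ℝ × ℝ) :
    HasCompactSupport (dirDeriv v f) := hf.fderiv_apply ℝ v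

lemma hasDerivAt_comp {f : ℝ × ℝ → ℝ} (hf : ContDiff ℝ (⊤ : ℕ∞) f) {a b : ℝ → ℝ} {a' b' t : ℝ}
    (ha : HasDerivAt a a' t) (hb : HasDerivAt b b' t) :
    HasDerivAt (fun s => f (a s, b s))
      (a' * dirDeriv (1, 0) f (a t, b t) + b' * dirDeriv (0, 1) f (a t, b t)) t := by
  have hd : HasFDerivAt f (fderiv ℝ f (a t, b t)) (a t, b t) :=
    (hf.differentiable (by simp) _).hasFDerivAt
  have h := hd.comp_hasDerivAt t (ha.prodMk hb)
  have e : ((a', b') : ℝ × ℝ) = a' • ((1, 0) : ℝ × ℝ) + b' • ((0, 1) : ℝ × ℝ) := by simp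
  rw [e, map_add, map_smul, map_smul] at h
  exact h

lemma dirDeriv_reflect {f : ℝ × ℝ → ℝ} (hf : ContDiff ℝ (⊤ : ℕ∞) f) (p v : ℝ × ℝ) :
    dirDeriv v (fun t => f (p - t)) = fun t => - dirDeriv v f (p - t) := by
  funext t
  have hd : HasFDerivAt f (fderiv ℝ f (p - t)) (p - t) :=
    (hf.differentiable (by simp) _).hasFDerivAt
  have := hd.comp t ((hasFDerivAt_id t).const_sub p)
  rw [dirDeriv, show (fun t => f (p - t)) = f ∘ HSub.hSub p from rfl, this.fderiv]
  simp [dirDeriv]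

lemma dirDeriv_neg (f : ℝ × ℝ → ℝ) (v : ℝ × ℝ) :
    dirDeriv v (fun t => - f t) = fun t => - dirDeriv v f t := by
  funext t
  simp [dirDeriv]

/-! ### Integrability of logarithmic singularities -/

lemma integrableOn_log_Icc (a b : ℝ) : IntegrableOn Real.log (Set.Icc a b) := by
  rcases le_total a b with h | h
  · exact (intervalIntegrable_iff_integrableOn_Icc_of_le h).1
      intervalIntegral.intervalIntegrable_log'
  · exact ((intervalIntegrable_iff_integrableOn_Icc_of_le le_rfl).1
      (intervalIntegral.intervalIntegrable_log' (a := a) (b := a))).mono_set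
      (Set.Icc_subset_Icc_right h)

lemma integrableOn_log_fst (a b c d : ℝ) :
    IntegrableOn (fun z : ℝ × ℝ => Real.log z.1) (Set.Icc a b ×ˢ Set.Icc c d) := by
  rw [IntegrableOn, Measure.volume_eq_prod, ← Measure.prod_restrict]
  exact (integrableOn_log_Icc a b).comp_fst _

lemma integrableOn_log_snd (a b c d : ℝ) :
    IntegrableOn (fun z : ℝ × ℝ => Real.log z.2) (Set.Icc a b ×ˢ Set.Icc c d) := by
  rw [IntegrableOn, Measure.volume_eq_prod, ← Measure.prod_restrict]
  exact (integrableOn_log_Icc c d).comp_snd _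

lemma measurable_logKernel : Measurable logKernel := by
  unfold logKernel
  fun_prop

/-- A bound by functions of one coordinate each. It holds at every point, also on the axes, where
the convention `log 0 = 0` enters. -/
lemma abs_logKernel_le (z : ℝ × ℝ) :
    |logKernel z| ≤ |Real.log z.1| + |Real.log z.2| + (|z.1| + |z.2|) := by
  obtain ⟨x, y⟩ := z
  simp only [logKernel]
  have hx := abs_nonneg (Real.log x)
  have hy := abs_nonneg (Real.log y)
  have hx' := abs_nonneg x
  have hy' := abs_nonneg y
  by_cases h : x = 0
  · subst h
    simp [Real.sqrt_sq_eq_abs]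
  have hxp : 0 < |x| := abs_pos.2 h
  have hle : |x| ≤ Real.sqrt (x ^ 2 + y ^ 2) :=
    Real.abs_le_sqrt (by nlinarith [sq_nonneg y])
  have hub : Real.sqrt (x ^ 2 + y ^ 2) ≤ |x| + |y| := by
    apply Real.sqrt_le_iff.2
    refine ⟨by positivity, ?_⟩
    nlinarith [sq_abs x, sq_abs y, mul_nonneg hx' hy']
  have h1 := Real.log_le_log hxp hle
  rw [Real.log_abs] at h1
  have h2 := Real.log_le_sub_one_of_pos (hxp.trans_le hle)
  have h3 := neg_abs_le (Real.log x)
  exact abs_le.2 ⟨by linarith, by linarith⟩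

lemma locallyIntegrable_logKernel : LocallyIntegrable logKernel (volume : Measure (ℝ × ℝ)) := by
  rw [locallyIntegrable_iff]
  intro k hk
  obtain ⟨R, hR⟩ := hk.isBounded.subset_closedBall 0
  have hsub : k ⊆ Set.Icc (-R) R ×ˢ Set.Icc (-R) R := by
    intro z hz
    have := hR hz
    rw [mem_closedBall_zero_iff, Prod.norm_def, max_le_iff, Real.norm_eq_abs, Real.norm_eq_abs,
      abs_le, abs_le] at this
    exact ⟨this.1, this.2⟩
  refine IntegrableOn.mono_set ?_ hsub
  have hc : IntegrableOn (fun z : ℝ × ℝ => |z.1| + |z.2|) (Set.Icc (-R) R ×ˢ Set.Icc (-R) R) :=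
    (by fun_prop : Continuous fun z : ℝ × ℝ => |z.1| + |z.2|).continuousOn.integrableOn_compact
      (isCompact_Icc.prod isCompact_Icc)
  refine Integrable.mono' (((integrableOn_log_fst (-R) R (-R) R).abs.add
    (integrableOn_log_snd (-R) R (-R) R).abs).add hc)
    measurable_logKernel.aestronglyMeasurable ?_
  exact Filter.Eventually.of_forall abs_logKernel_le

lemma integrableOn_log_mul_one {f : ℝ → ℝ} (hf : Continuous f) {R : ℝ}
    (hR : ∀ r, R < r → f r = 0) :
    IntegrableOn (fun r => Real.log r * f r) (Set.Ioi 0) := by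
  have h := (integrableOn_log_Icc 0 R).mul_continuousOn hf.continuousOn isCompact_Icc
  refine h.of_forall_sdiff_eq_zero measurableSet_Ioi ?_
  rintro r ⟨h0, h1⟩
  have : R < r := by
    by_contra! hc
    exact h1 ⟨le_of_lt h0, hc⟩
  simp [hR r this]

lemma integrableOn_log_mul_two {f : ℝ × ℝ → ℝ} (hf : Continuous f) {R : ℝ}
    (hR : ∀ z : ℝ × ℝ, R < z.1 → f z = 0) :
    IntegrableOn (fun z : ℝ × ℝ => Real.log z.1 * f z)
      (Set.Ioi 0 ×ˢ Set.Ioo (-Real.pi) Real.pi) := by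
  have h := (integrableOn_log_fst 0 R (-Real.pi) Real.pi).mul_continuousOn hf.continuousOn
    (isCompact_Icc.prod isCompact_Icc)
  refine h.of_forall_sdiff_eq_zero (measurableSet_Ioi.prod measurableSet_Ioo) ?_
  rintro z ⟨⟨h0, h2⟩, h1⟩
  have : R < z.1 := by
    by_contra! hc
    exact h1 ⟨⟨le_of_lt h0, hc⟩, ⟨h2.1.le, h2.2.le⟩⟩
  simp [hR z this]

/-! ### The distributional identity `Δ log |z| = 2π δ₀` in polar coordinates -/

/-- A compactly supported function vanishes at all points with large first polar coordinate. -/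
lemma exists_polar_bound {f : ℝ × ℝ → ℝ} (hf : HasCompactSupport f) :
    ∃ R : ℝ, ∀ R' ≥ R, ∀ r θ : ℝ, R' < r → f (r * Real.cos θ, r * Real.sin θ) = 0 := by
  obtain ⟨R, hR⟩ := hf.isCompact.isBounded.subset_closedBall 0
  refine ⟨2 * |R|, fun R' hR' r θ hr => ?_⟩
  by_contra hne
  have := hR (subset_tsupport f hne)
  rw [mem_closedBall_zero_iff, Prod.norm_def, max_le_iff, Real.norm_eq_abs, Real.norm_eq_abs,
    abs_le, abs_le] at this
  obtain ⟨⟨a1, a2⟩, b1, b2⟩ := this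
  have hcs := Real.sin_sq_add_cos_sq θ
  have hRa := le_abs_self R
  have h0 := abs_nonneg R
  have e : r ^ 2 = (r * Real.cos θ) ^ 2 + (r * Real.sin θ) ^ 2 := by
    linear_combination (-r ^ 2) * hcs
  have e1 : (r * Real.cos θ) ^ 2 ≤ |R| ^ 2 := by
    rw [sq_abs]; exact sq_le_sq' (by linarith) a2
  have e2 : (r * Real.sin θ) ^ 2 ≤ |R| ^ 2 := by
    rw [sq_abs]; exact sq_le_sq' (by linarith) b2
  nlinarith

/-- The radial derivative `∂_r u` of `u (r, θ) = h (r cos θ, r sin θ)`. -/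
noncomputable def radial (h : ℝ × ℝ → ℝ) (z : ℝ × ℝ) : ℝ :=
  Real.cos z.2 * dirDeriv (1, 0) h (z.1 * Real.cos z.2, z.1 * Real.sin z.2) +
  Real.sin z.2 * dirDeriv (0, 1) h (z.1 * Real.cos z.2, z.1 * Real.sin z.2)

/-- The tangential derivative `r⁻¹ ∂_θ u` of `u (r, θ) = h (r cos θ, r sin θ)`, in a form that makes
sense at `r = 0`. -/
noncomputable def tangential (h : ℝ × ℝ → ℝ) (z : ℝ × ℝ) : ℝ :=
  -Real.sin z.2 * dirDeriv (1, 0) h (z.1 * Real.cos z.2, z.1 * Real.sin z.2) +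
  Real.cos z.2 * dirDeriv (0, 1) h (z.1 * Real.cos z.2, z.1 * Real.sin z.2)

/-- The radial part `∂_r (r ∂_r u)` of `r Δh`. -/
noncomputable def radialPart (h : ℝ × ℝ → ℝ) (z : ℝ × ℝ) : ℝ :=
  radial h z + z.1 * (Real.cos z.2 * radial (dirDeriv (1, 0) h) z +
    Real.sin z.2 * radial (dirDeriv (0, 1) h) z)

/-- The angular part `∂_θ (r⁻¹ ∂_θ u)` of `r Δh`. -/
noncomputable def angularPart (h : ℝ × ℝ → ℝ) (z : ℝ × ℝ) : ℝ :=
  -radial h z + z.1 * (-Real.sin z.2 * tangential (dirDeriv (1, 0) h) z +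
    Real.cos z.2 * tangential (dirDeriv (0, 1) h) z)

section

variable {h : ℝ × ℝ → ℝ}

lemma continuous_radial (hh : ContDiff ℝ (⊤ : ℕ∞) h) : Continuous (radial h) := by
  have h1 := (contDiff_dirDeriv hh (1, 0)).continuous
  have h2 := (contDiff_dirDeriv hh (0, 1)).continuous
  unfold radial
  fun_prop

lemma continuous_tangential (hh : ContDiff ℝ (⊤ : ℕ∞) h) : Continuous (tangential h) := by
  have h1 := (contDiff_dirDeriv hh (1, 0)).continuous
  have h2 := (contDiff_dirDeriv hh (0, 1)).continuous
  unfold tangential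
  fun_prop

lemma continuous_radialPart (hh : ContDiff ℝ (⊤ : ℕ∞) h) : Continuous (radialPart h) := by
  have h0 := continuous_radial hh
  have h1 := continuous_radial (contDiff_dirDeriv hh (1, 0))
  have h2 := continuous_radial (contDiff_dirDeriv hh (0, 1))
  unfold radialPart
  fun_prop

lemma continuous_angularPart (hh : ContDiff ℝ (⊤ : ℕ∞) h) : Continuous (angularPart h) := by
  have h0 := continuous_radial hh
  have h1 := continuous_tangential (contDiff_dirDeriv hh (1, 0))
  have h2 := continuous_tangential (contDiff_dirDeriv hh (0, 1))
  unfold angularPart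
  fun_prop

lemma radialPart_add_angularPart (z : ℝ × ℝ) :
    radialPart h z + angularPart h z =
      z.1 * (dirDeriv (1, 0) (dirDeriv (1, 0) h) (z.1 * Real.cos z.2, z.1 * Real.sin z.2) +
        dirDeriv (0, 1) (dirDeriv (0, 1) h) (z.1 * Real.cos z.2, z.1 * Real.sin z.2)) := by
  have hcs := Real.sin_sq_add_cos_sq z.2
  simp only [radialPart, angularPart, radial, tangential]
  linear_combination (z.1 *
    (dirDeriv (1, 0) (dirDeriv (1, 0) h) (z.1 * Real.cos z.2, z.1 * Real.sin z.2) +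
      dirDeriv (0, 1) (dirDeriv (0, 1) h) (z.1 * Real.cos z.2, z.1 * Real.sin z.2))) * hcs

lemma hasDerivAt_radius (hh : ContDiff ℝ (⊤ : ℕ∞) h) (r θ : ℝ) :
    HasDerivAt (fun r => h (r * Real.cos θ, r * Real.sin θ)) (radial h (r, θ)) r := by
  have := hasDerivAt_comp hh ((hasDerivAt_id r).mul_const (Real.cos θ))
    ((hasDerivAt_id r).mul_const (Real.sin θ))
  simpa [radial] using this

lemma hasDerivAt_angle (hh : ContDiff ℝ (⊤ : ℕ∞) h) (r θ : ℝ) :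
    HasDerivAt (fun θ => h (r * Real.cos θ, r * Real.sin θ)) (r * tangential h (r, θ)) θ := by
  have := hasDerivAt_comp hh ((Real.hasDerivAt_cos θ).const_mul r)
    ((Real.hasDerivAt_sin θ).const_mul r)
  convert this using 1
  simp only [tangential]
  ring

lemma hasDerivAt_mul_radial (hh : ContDiff ℝ (⊤ : ℕ∞) h) (r θ : ℝ) :
    HasDerivAt (fun r => r * radial h (r, θ)) (radialPart h (r, θ)) r := by
  have h1 := hasDerivAt_radius (contDiff_dirDeriv hh (1, 0)) r θ
  have h2 := hasDerivAt_radius (contDiff_dirDeriv hh (0, 1)) r θ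
  have := (hasDerivAt_id r).mul
    ((h1.const_mul (Real.cos θ)).add (h2.const_mul (Real.sin θ)))
  refine HasDerivAt.congr_deriv this ?_
  simp [radialPart, radial]

lemma hasDerivAt_tangential (hh : ContDiff ℝ (⊤ : ℕ∞) h) (r θ : ℝ) :
    HasDerivAt (fun θ => tangential h (r, θ)) (angularPart h (r, θ)) θ := by
  have h1 := hasDerivAt_angle (contDiff_dirDeriv hh (1, 0)) r θ
  have h2 := hasDerivAt_angle (contDiff_dirDeriv hh (0, 1)) r θ
  have := ((Real.hasDerivAt_sin θ).neg.mul h1).add ((Real.hasDerivAt_cos θ).mul h2)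
  refine HasDerivAt.congr_deriv this ?_
  simp only [angularPart, radial, Pi.neg_apply]
  ring

lemma integral_angularPart (hh : ContDiff ℝ (⊤ : ℕ∞) h) (r : ℝ) :
    ∫ θ in Set.Ioo (-Real.pi) Real.pi, angularPart h (r, θ) = 0 := by
  rw [← integral_Ioc_eq_integral_Ioo,
    ← intervalIntegral.integral_of_le (by linarith [Real.pi_pos]),
    intervalIntegral.integral_eq_sub_of_hasDerivAt (fun θ _ => hasDerivAt_tangential hh r θ)
      ((continuous_angularPart hh).comp (by fun_prop : Continuous fun θ : ℝ => (r, θ))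
        |>.intervalIntegrable _ _)]
  simp [tangential]

lemma exists_bound_parts (hs : HasCompactSupport h) :
    ∃ R : ℝ, ∀ z : ℝ × ℝ, R < z.1 → h (z.1 * Real.cos z.2, z.1 * Real.sin z.2) = 0 ∧
      radial h z = 0 ∧ radialPart h z = 0 ∧ angularPart h z = 0 := by
  have s1 := hasCompactSupport_dirDeriv hs (1, 0)
  have s2 := hasCompactSupport_dirDeriv hs (0, 1)
  obtain ⟨R0, h0⟩ := exists_polar_bound hs
  obtain ⟨R1, h1⟩ := exists_polar_bound s1
  obtain ⟨R2, h2⟩ := exists_polar_bound s2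
  obtain ⟨R3, h3⟩ := exists_polar_bound (hasCompactSupport_dirDeriv s1 (1, 0))
  obtain ⟨R4, h4⟩ := exists_polar_bound (hasCompactSupport_dirDeriv s1 (0, 1))
  obtain ⟨R5, h5⟩ := exists_polar_bound (hasCompactSupport_dirDeriv s2 (1, 0))
  obtain ⟨R6, h6⟩ := exists_polar_bound (hasCompactSupport_dirDeriv s2 (0, 1))
  refine ⟨max R0 (max R1 (max R2 (max R3 (max R4 (max R5 R6))))), fun z hz => ?_⟩
  have e0 := h0 _ (by simp) z.1 z.2 hz
  have e1 := h1 _ (by simp) z.1 z.2 hz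
  have e2 := h2 _ (by simp) z.1 z.2 hz
  have e3 := h3 _ (by simp) z.1 z.2 hz
  have e4 := h4 _ (by simp) z.1 z.2 hz
  have e5 := h5 _ (by simp) z.1 z.2 hz
  have e6 := h6 _ (by simp) z.1 z.2 hz
  simp [radialPart, angularPart, radial, tangential, e0, e1, e2, e3, e4, e5, e6]

lemma integral_log_mul_radialPart (hh : ContDiff ℝ (⊤ : ℕ∞) h) (hs : HasCompactSupport h)
    (θ : ℝ) :
    ∫ r in Set.Ioi (0 : ℝ), Real.log r * radialPart h (r, θ) = h 0 := by
  obtain ⟨R, hR⟩ := exists_bound_parts hs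
  have hpair : Continuous fun r : ℝ => (r, θ) := by fun_prop
  have hint := integrableOn_log_mul_one ((continuous_radialPart hh).comp hpair)
    (fun r hr => (hR (r, θ) hr).2.2.1)
  have hcont : Continuous fun r => r * Real.log r * radial h (r, θ) -
      h (r * Real.cos θ, r * Real.sin θ) := by
    refine (Real.continuous_mul_log.mul ((continuous_radial hh).comp hpair)).sub ?_
    have := hh.continuous
    fun_prop
  have key := integral_Ioi_of_hasDerivAt_of_tendsto (a := 0) (m := 0)
    (f' := fun r => Real.log r * radialPart h (r, θ)) hcont.continuousWithinAt ?_ hint ?_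
  · rw [key]
    simp only [zero_mul, zero_sub, sub_neg_eq_add, zero_add]
    rfl
  · intro r hr
    have hr0 : r ≠ 0 := ne_of_gt hr
    have := ((Real.hasDerivAt_log hr0).mul (hasDerivAt_mul_radial hh r θ)).sub
      (hasDerivAt_radius hh r θ)
    have e : (fun r => r * Real.log r * radial h (r, θ) - h (r * Real.cos θ, r * Real.sin θ)) =
        fun r => Real.log r * (r * radial h (r, θ)) - h (r * Real.cos θ, r * Real.sin θ) := by
      funext r
      ring
    rw [e]
    refine HasDerivAt.congr_deriv this ?_
    rw [inv_mul_cancel_left₀ hr0]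
    ring
  · refine tendsto_const_nhds.congr' ?_
    filter_upwards [Filter.eventually_gt_atTop R] with r hr
    have := hR (r, θ) hr
    simp [this.1, this.2.1]

theorem integral_logKernel_laplacian (hh : ContDiff ℝ (⊤ : ℕ∞) h) (hs : HasCompactSupport h) :
    ∫ t, logKernel t * (dirDeriv (1, 0) (dirDeriv (1, 0) h) t +
      dirDeriv (0, 1) (dirDeriv (0, 1) h) t) = 2 * Real.pi * h 0 := by
  obtain ⟨R, hR⟩ := exists_bound_parts hs
  have i1 := integrableOn_log_mul_two (continuous_radialPart hh) (fun z hz => (hR z hz).2.2.1)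
  have i2 := integrableOn_log_mul_two (continuous_angularPart hh) (fun z hz => (hR z hz).2.2.2)
  rw [← integral_comp_polarCoord_symm, polarCoord_target]
  have e : ∀ z ∈ Set.Ioi (0 : ℝ) ×ˢ Set.Ioo (-Real.pi) Real.pi,
      z.1 • (logKernel (polarCoord.symm z) *
        (dirDeriv (1, 0) (dirDeriv (1, 0) h) (polarCoord.symm z) +
          dirDeriv (0, 1) (dirDeriv (0, 1) h) (polarCoord.symm z))) =
      Real.log z.1 * radialPart h z + Real.log z.1 * angularPart h z := by
    rintro z ⟨hz, -⟩
    have hk : logKernel (polarCoord.symm z) = Real.log z.1 := by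
      simp only [logKernel, polarCoord_symm_apply]
      have hcs := Real.sin_sq_add_cos_sq z.2
      rw [show (z.1 * Real.cos z.2) ^ 2 + (z.1 * Real.sin z.2) ^ 2 = z.1 ^ 2 by
        linear_combination z.1 ^ 2 * hcs, Real.sqrt_sq (le_of_lt hz)]
    rw [hk, ← mul_add, radialPart_add_angularPart]
    simp only [polarCoord_symm_apply, smul_eq_mul]
    ring
  rw [setIntegral_congr_fun (measurableSet_Ioi.prod measurableSet_Ioo) e, integral_add i1 i2]
  have r1 : ∫ z in Set.Ioi (0 : ℝ) ×ˢ Set.Ioo (-Real.pi) Real.pi,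
      Real.log z.1 * radialPart h z = 2 * Real.pi * h 0 := by
    rw [IntegrableOn, Measure.volume_eq_prod, ← Measure.prod_restrict] at i1
    rw [Measure.volume_eq_prod, ← Measure.prod_restrict, integral_prod_symm _ i1]
    simp only [integral_log_mul_radialPart hh hs]
    rw [setIntegral_const, smul_eq_mul, Real.volume_real_Ioo_of_le (by linarith [Real.pi_pos])]
    ring
  have r2 : ∫ z in Set.Ioi (0 : ℝ) ×ˢ Set.Ioo (-Real.pi) Real.pi,
      Real.log z.1 * angularPart h z = 0 := by
    rw [Measure.volume_eq_prod] at i2 ⊢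
    rw [setIntegral_prod _ i2]
    simp only [integral_const_mul, integral_angularPart hh, mul_zero, integral_zero]
  rw [r1, r2, add_zero]

/-! ### The convolution with the kernel -/

lemma logConv_apply (p : ℝ × ℝ) : logConv h p = ∫ t, logKernel t * h (p - t) := rfl

lemma convolutionExists (hh : Continuous h) (hs : HasCompactSupport h) :
    ConvolutionExists logKernel h (ContinuousLinearMap.mul ℝ ℝ) volume :=
  hs.convolutionExists_right _ locallyIntegrable_logKernel hh

lemma contDiff_logConv (hh : ContDiff ℝ (⊤ : ℕ∞) h) (hs : HasCompactSupport h) :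
    ContDiff ℝ (⊤ : ℕ∞) (logConv h) :=
  hs.contDiff_convolution_right _ locallyIntegrable_logKernel hh

lemma dirDeriv_logConv (hh : ContDiff ℝ (⊤ : ℕ∞) h) (hs : HasCompactSupport h) (v : ℝ × ℝ) :
    dirDeriv v (logConv h) = logConv (dirDeriv v h) := by
  funext p
  have hd := hs.hasFDerivAt_convolution_right (ContinuousLinearMap.mul ℝ ℝ)
    locallyIntegrable_logKernel (hh.of_le (by norm_cast)) p
  unfold dirDeriv logConv
  rw [hd.fderiv]
  exact convolution_precompR_apply _ locallyIntegrable_logKernel (hs.fderiv ℝ)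
    (hh.continuous_fderiv (by simp)) p v

theorem laplacian_logConv (hh : ContDiff ℝ (⊤ : ℕ∞) h) (hs : HasCompactSupport h) (p : ℝ × ℝ) :
    dirDeriv (1, 0) (dirDeriv (1, 0) (logConv h)) p +
      dirDeriv (0, 1) (dirDeriv (0, 1) (logConv h)) p = 2 * Real.pi * h p := by
  have c := contDiff_dirDeriv hh
  have s := hasCompactSupport_dirDeriv hs
  rw [dirDeriv_logConv hh hs, dirDeriv_logConv hh hs, dirDeriv_logConv (c _) (s _),
    dirDeriv_logConv (c _) (s _), logConv_apply, logConv_apply]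
  have i := fun v w : ℝ × ℝ => convolutionExists (contDiff_dirDeriv (c v) w).continuous
    (hasCompactSupport_dirDeriv (s v) w) p
  refine (integral_add (i (1, 0) (1, 0)) (i (0, 1) (0, 1))).symm.trans ?_
  have hr : ContDiff ℝ (⊤ : ℕ∞) (fun t => h (p - t)) := hh.comp (contDiff_const.sub contDiff_id)
  have hrs : HasCompactSupport (fun t => h (p - t)) :=
    hs.comp_homeomorph (Homeomorph.subLeft p)
  have := integral_logKernel_laplacian hr hrs
  rw [sub_zero] at this
  rw [← this]
  congr 1
  funext t
  simp only [dirDeriv_reflect hh, dirDeriv_reflect (c _), dirDeriv_neg, neg_neg]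
  exact (mul_add _ _ _).symm

end

lemma iteratedDeriv_two_fst {F : ℝ × ℝ → ℝ} (hF : ContDiff ℝ (⊤ : ℕ∞) F) (p : ℝ × ℝ) :
    iteratedDeriv 2 (fun x => F (x, p.2)) p.1 = dirDeriv (1, 0) (dirDeriv (1, 0) F) p := by
  have key : ∀ {G : ℝ × ℝ → ℝ}, ContDiff ℝ (⊤ : ℕ∞) G →
      deriv (fun x => G (x, p.2)) = fun x => dirDeriv (1, 0) G (x, p.2) := by
    intro G hG
    funext x
    simpa using (hasDerivAt_comp hG (hasDerivAt_id x) (hasDerivAt_const x p.2)).deriv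
  rw [iteratedDeriv_succ, iteratedDeriv_one, key hF, key (contDiff_dirDeriv hF _)]

lemma iteratedDeriv_two_snd {F : ℝ × ℝ → ℝ} (hF : ContDiff ℝ (⊤ : ℕ∞) F) (p : ℝ × ℝ) :
    iteratedDeriv 2 (fun y => F (p.1, y)) p.2 = dirDeriv (0, 1) (dirDeriv (0, 1) F) p := by
  have key : ∀ {G : ℝ × ℝ → ℝ}, ContDiff ℝ (⊤ : ℕ∞) G →
      deriv (fun y => G (p.1, y)) = fun y => dirDeriv (0, 1) G (p.1, y) := by
    intro G hG
    funext y
    simpa using (hasDerivAt_comp hG (hasDerivAt_const y p.1) (hasDerivAt_id y)).deriv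
  rw [iteratedDeriv_succ, iteratedDeriv_one, key hF, key (contDiff_dirDeriv hF _)]

end LogPotential

open LogPotential in
/-- The Newtonian (logarithmic) potential of a smooth compactly supported `g` solves
the 2D Poisson equation `ΔΦ = g`. -/
theorem stmt_6 (g : ℝ × ℝ → ℝ) (hg : ContDiff ℝ (⊤ : ℕ∞) g) (hsupp : HasCompactSupport g)
    (Φ : ℝ × ℝ → ℝ)
    (hΦ : ∀ p : ℝ × ℝ, Φ p = (2 * Real.pi)⁻¹ *
      ∫ q : ℝ × ℝ, Real.log (Real.sqrt ((p.1 - q.1) ^ 2 + (p.2 - q.2) ^ 2)) * g q) :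
    (∀ p : ℝ × ℝ, Integrable (fun q : ℝ × ℝ =>
        Real.log (Real.sqrt ((p.1 - q.1) ^ 2 + (p.2 - q.2) ^ 2)) * g q)) ∧
    ContDiff ℝ 2 Φ ∧
    (∀ p : ℝ × ℝ, iteratedDeriv 2 (fun x => Φ (x, p.2)) p.1 +
      iteratedDeriv 2 (fun y => Φ (p.1, y)) p.2 = g p) := by
  have hc := contDiff_logConv hg hsupp
  have hΦ' : Φ = fun p => (2 * Real.pi)⁻¹ * logConv g p := by
    funext p
    rw [hΦ p, logConv, convolution_eq_swap]
    rfl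
  refine ⟨fun p => (convolutionExists hg.continuous hsupp p).integrable_swap, ?_, fun p => ?_⟩
  · rw [hΦ']
    exact (contDiff_const.mul hc).of_le (by norm_cast)
  · have hpi : (2 * Real.pi) ≠ 0 := by positivity
    rw [hΦ']
    simp only [iteratedDeriv_const_mul_field]
    rw [iteratedDeriv_two_fst hc, iteratedDeriv_two_snd hc, ← mul_add,
      laplacian_logConv hg hsupp, inv_mul_cancel_left₀ hpi]
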